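/- arXiv:2011.05173 — 8 statements merged into one kernel-verified Lean document; each statement's English description precedes it below -/
import Mathlib

section
/- Let R be a principal ideal domain and let n be a natural number. Let A, B be n×n matrices over R. If the matrix equation B·X = A has at least one solution X in the n×n matrices over R, then there exists an n×n matrix F over R such that B·F = A and for every n×n matrix X with B·X = A there exists an n×n matrix M with X = F·M. (In other words, a left greatest common divisor of the set of solutions of a solvable equation B·X = A exists and is itself a solution.) -/
theorem exists_split_of_finrank_le {R K L : Type*} [CommRing R] [IsDomain R]
    [AddCommGroup K] [Module R K] [Module.Free R K] [Module.Finite R K]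
    [AddCommGroup L] [Module R L] [Module.Free R L] [Module.Finite R L]
    (h : Module.finrank R K ≤ Module.finrank R L) :
    ∃ (s : L →ₗ[R] K) (t : K →ₗ[R] L), ∀ k, s (t k) = k := by
  let bK := Module.finBasis R K
  let bL := Module.finBasis R L
  let t : K →ₗ[R] L := bK.constr R (fun i => bL (Fin.castLE h i))
  let s : L →ₗ[R] K := bL.constr R
    (fun j => if hj : (j : ℕ) < Module.finrank R K then bK ⟨j, hj⟩ else 0)
  refine ⟨s, t, fun k => ?_⟩
  have : s ∘ₗ t = LinearMap.id := by
    refine bK.ext fun i => ?_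
    simp only [s, t, LinearMap.comp_apply, Module.Basis.constr_basis, LinearMap.id_apply]
    simp only [Fin.val_castLE, Fin.is_lt, dif_pos, Fin.eta]
  exact LinearMap.congr_fun this k

theorem gcd_linear {R V : Type*} [CommRing R] [IsDomain R] [IsPrincipalIdealRing R]
    [AddCommGroup V] [Module R V] [Module.Free R V] [Module.Finite R V]
    (a b x0 : V →ₗ[R] V) (h : b ∘ₗ x0 = a) :
    ∃ f : V →ₗ[R] V, b ∘ₗ f = a ∧ ∀ x : V →ₗ[R] V, b ∘ₗ x = a →
      ∃ m : V →ₗ[R] V, x = f ∘ₗ m := by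
  have hx0 : ∀ v, b (x0 v) = a v := fun v => LinearMap.congr_fun h v
  have hle : LinearMap.range a ≤ LinearMap.range b := by
    rintro _ ⟨v, rfl⟩
    exact ⟨x0 v, hx0 v⟩
  have hr := Submodule.finrank_mono hle
  have h1 := Submodule.finrank_quotient_add_finrank (LinearMap.ker a)
  rw [a.quotKerEquivRange.finrank_eq] at h1
  have h2 := Submodule.finrank_quotient_add_finrank (LinearMap.ker b)
  rw [b.quotKerEquivRange.finrank_eq] at h2
  obtain ⟨s, t, hst⟩ := exists_split_of_finrank_le (R := R)
    (K := LinearMap.ker b) (L := LinearMap.ker a) (by omega)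
  obtain ⟨g, hg⟩ := Module.projective_lifting_property a.rangeRestrict LinearMap.id
    a.surjective_rangeRestrict
  have hg' : ∀ v, a (g (a.rangeRestrict v)) = a v := fun v => by
    have := LinearMap.congr_fun hg (a.rangeRestrict v)
    exact congrArg Subtype.val this
  let p : V →ₗ[R] LinearMap.ker a :=
    (LinearMap.id - g ∘ₗ a.rangeRestrict).codRestrict (LinearMap.ker a) (fun v => by
      simp only [LinearMap.mem_ker, LinearMap.sub_apply, map_sub, LinearMap.id_apply,
        LinearMap.comp_apply, hg', sub_self])
  have hp : ∀ l : LinearMap.ker a, p l = l := fun l => by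
    have h0 : a.rangeRestrict (l : V) = 0 := Subtype.ext l.2
    apply Subtype.ext
    change (l : V) - g (a.rangeRestrict l) = l
    rw [h0, map_zero, sub_zero]
  let f : V →ₗ[R] V := x0 ∘ₗ (LinearMap.id - (LinearMap.ker a).subtype ∘ₗ p)
    + (LinearMap.ker b).subtype ∘ₗ s ∘ₗ p
  have hfa : ∀ v, f v = x0 (v - (p v : V)) + (s (p v) : V) := fun v => rfl
  have hf : ∀ v, b (f v) = a v := fun v => by
    have e1 : b (s (p v) : V) = 0 := (s (p v)).2
    have e2 : a (p v : V) = 0 := (p v).2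
    rw [hfa, map_add, hx0, map_sub, e1, e2, sub_zero, add_zero]
  have hfl : ∀ l : LinearMap.ker a, f l = s l := fun l => by
    rw [hfa, hp, sub_self, map_zero, zero_add]
  refine ⟨f, LinearMap.ext hf, fun x hx => ?_⟩
  let d : V →ₗ[R] LinearMap.ker b := (x - f).codRestrict (LinearMap.ker b) (fun v => by
    have : b (x v) = a v := LinearMap.congr_fun hx v
    rw [LinearMap.mem_ker, LinearMap.sub_apply, map_sub, this, hf, sub_self])
  refine ⟨LinearMap.id + (LinearMap.ker a).subtype ∘ₗ t ∘ₗ d, LinearMap.ext fun v => ?_⟩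
  change x v = f (v + (t (d v) : V))
  rw [map_add, hfl, hst]
  change x v = f v + (x v - f v)
  abel

/-- A left greatest common divisor of the solutions of a solvable matrix
equation `B * X = A` over a PID exists and is itself a solution. -/
theorem gcd_of_solutions_is_solution
    (R : Type*) [CommRing R] [IsDomain R] [IsPrincipalIdealRing R]
    (n : ℕ) (A B : Matrix (Fin n) (Fin n) R)
    (h : ∃ X : Matrix (Fin n) (Fin n) R, B * X = A) :
    ∃ F : Matrix (Fin n) (Fin n) R, B * F = A ∧
      ∀ X : Matrix (Fin n) (Fin n) R, B * X = A →
        ∃ M : Matrix (Fin n) (Fin n) R, X = F * M := by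
  obtain ⟨X0, h0⟩ := h
  obtain ⟨f, hf, hm⟩ := gcd_linear (Matrix.toLin' A) (Matrix.toLin' B) (Matrix.toLin' X0)
    (by rw [← Matrix.toLin'_mul, h0])
  refine ⟨LinearMap.toMatrix' f, ?_, fun X hX => ?_⟩
  · apply Matrix.toLin'.injective
    rw [Matrix.toLin'_mul, Matrix.toLin'_toMatrix', hf]
  · obtain ⟨m, hm⟩ := hm (Matrix.toLin' X) (by rw [← Matrix.toLin'_mul, hX])
    refine ⟨LinearMap.toMatrix' m, ?_⟩
    apply Matrix.toLin'.injective
    rw [Matrix.toLin'_mul, Matrix.toLin'_toMatrix', Matrix.toLin'_toMatrix', hm]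
end

section
/- Let R be a principal ideal domain and let n be a natural number. Let A, B be n×n matrices over R. If the matrix equation B·X = A has at least one solution, then there exists an n×n matrix N over R such that B·N = A and for every n×n matrix X with B·X = A there exists an n×n matrix P with N = P·X. (In other words, a left least common multiple of the set of solutions of a solvable equation B·X = A, namely a common left multiple of all solutions, exists and is itself a solution.) -/
/-- A left least common multiple of the solutions of a solvable matrix
equation `B * X = A` over a PID exists and is itself a solution. -/
theorem lcm_of_solutions_is_solution
    (R : Type*) [CommRing R] [IsDomain R] [IsPrincipalIdealRing R]
    (n : ℕ) (A B : Matrix (Fin n) (Fin n) R)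
    (h : ∃ X : Matrix (Fin n) (Fin n) R, B * X = A) :
    ∃ N : Matrix (Fin n) (Fin n) R, B * N = A ∧
      ∀ X : Matrix (Fin n) (Fin n) R, B * X = A →
        ∃ P : Matrix (Fin n) (Fin n) R, N = P * X := by
  obtain ⟨X₀, h₀⟩ := h
  let f := Matrix.toLin' B
  have hfree : Module.Free R (LinearMap.range f) := inferInstance
  obtain ⟨s, hs⟩ := Module.projective_lifting_property f.rangeRestrict
    (LinearMap.id) f.surjective_rangeRestrict
  let p : (Fin n → R) →ₗ[R] (Fin n → R) := s ∘ₗ f.rangeRestrict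
  have hp : f ∘ₗ p = f := by
    ext1 i
    ext1
    have h1 := LinearMap.congr_fun hs (f.rangeRestrict (Pi.single i 1))
    have h2 := congrArg Subtype.val h1
    simpa [p] using h2
  have hB : B * LinearMap.toMatrix' p = B := by
    have h3 := congrArg LinearMap.toMatrix' hp
    rwa [LinearMap.toMatrix'_comp, LinearMap.toMatrix'_toLin'] at h3
  refine ⟨LinearMap.toMatrix' p * X₀, by rw [← Matrix.mul_assoc, hB, h₀], ?_⟩
  intro X hX
  refine ⟨LinearMap.toMatrix' p, ?_⟩
  apply Matrix.toLin'.injective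
  rw [Matrix.toLin'_mul, Matrix.toLin'_mul, Matrix.toLin'_toMatrix']
  have h4 : f ∘ₗ Matrix.toLin' X₀ = f ∘ₗ Matrix.toLin' X := by
    rw [← Matrix.toLin'_mul, ← Matrix.toLin'_mul, h₀, hX]
  refine LinearMap.ext fun v => ?_
  change s (f.rangeRestrict _) = s (f.rangeRestrict _)
  congr 1
  exact Subtype.ext (LinearMap.congr_fun h4 v)
end

section
/- Let R be a principal ideal domain and let n be a natural number. Let A, B be n×n matrices over R (indexed by Fin n) and suppose the matrix equation B·X = A has at least one solution. Then there exist natural numbers t and s with t + s = n, a bijection e : Fin n ≃ Fin t ⊕ Fin s, an invertible n×n matrix Q over R, and an n×n matrix F over R with B·F = A, such that for every n×n matrix X over R: B·X = A if and only if there exist matrices T₃ (of size s×t) and T₄ (of size s×s) over R with X = F · (Q · Mₑ(fromBlocks(I_t, 0, T₃, T₄)) · Q⁻¹), where Mₑ denotes reindexing a (Fin t ⊕ Fin s)-indexed matrix back to Fin n along the bijection e. (This describes the complete solution set of B·X = A as the set of right multiples of one fixed solution F by block lower triangular unimodular-type factors.) -/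
open Matrix in
theorem aux_gen {R : Type*} [CommRing R] [IsDomain R] [IsPrincipalIdealRing R]
    {n s : ℕ} (B : Matrix (Fin n) (Fin n) R)
    (hs : Module.finrank R (LinearMap.ker B.mulVecLin) ≤ s) :
    ∃ K : Matrix (Fin n) (Fin s) R, B * K = 0 ∧
      ∀ (m : ℕ) (D : Matrix (Fin n) (Fin m) R), B * D = 0 →
        ∃ T : Matrix (Fin s) (Fin m) R, D = K * T := by
  obtain ⟨d, rfl⟩ := Nat.exists_eq_add_of_le hs
  set k := Module.finrank R (LinearMap.ker B.mulVecLin) with hk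
  let b : Module.Basis (Fin k) R (LinearMap.ker B.mulVecLin) := Module.finBasis R _
  let K0 : Matrix (Fin n) (Fin k) R := Matrix.of fun i j => (b j : Fin n → R) i
  let e : Fin (k + d) ≃ Fin k ⊕ Fin d := finSumFinEquiv.symm
  have hBK0 : B * K0 = 0 := by
    ext i j
    have h1 : B.mulVecLin (b j : Fin n → R) = 0 := (b j).2
    exact congrFun h1 i
  refine ⟨(fromCols K0 0).submatrix id e, ?_, ?_⟩
  · have : B * (fromCols K0 (0 : Matrix (Fin n) (Fin d) R)) = 0 := by
      rw [mul_fromCols, hBK0, Matrix.mul_zero, fromCols_zero]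
    ext i j
    exact congrFun (congrFun this i) (e j)
  · intro m D hD
    have hmem : ∀ j, (fun i => D i j) ∈ LinearMap.ker B.mulVecLin := by
      intro j
      rw [LinearMap.mem_ker]
      ext i
      exact congrFun (congrFun hD i) j
    let T0 : Matrix (Fin k) (Fin m) R := Matrix.of fun l j => b.repr ⟨_, hmem j⟩ l
    have hD0 : D = K0 * T0 := by
      ext i j
      have h1 := congrArg (fun v : LinearMap.ker B.mulVecLin => (v : Fin n → R) i)
        (b.sum_repr ⟨_, hmem j⟩)
      simp only [Submodule.coe_sum, Finset.sum_apply, Submodule.coe_smul, Pi.smul_apply,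
        smul_eq_mul] at h1
      rw [← h1, Matrix.mul_apply]
      exact Finset.sum_congr rfl fun l _ => mul_comm _ _
    refine ⟨(fromRows T0 0).submatrix e id, ?_⟩
    rw [submatrix_mul_equiv, fromCols_mul_fromRows]
    simpa using hD0

open Matrix in
theorem aux_basis {R : Type*} [CommRing R] [IsDomain R] [IsPrincipalIdealRing R]
    {n : ℕ} (A : Matrix (Fin n) (Fin n) R) :
    ∃ t s : ℕ, t + s = n ∧ s = Module.finrank R (LinearMap.ker A.mulVecLin) ∧
      ∃ (Q₁ : Matrix (Fin n) (Fin t) R) (Q₂ : Matrix (Fin n) (Fin s) R)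
        (P : Matrix (Fin t ⊕ Fin s) (Fin n) R), fromCols Q₁ Q₂ * P = 1 ∧
        P * fromCols Q₁ Q₂ = 1 ∧ A * Q₂ = 0 := by
  let N := LinearMap.ker A.mulVecLin
  have : Module.Free R ((Fin n → R) ⧸ N) :=
    Module.Free.of_equiv A.mulVecLin.quotKerEquivRange.symm
  let b : Module.Basis (Fin (Module.finrank R N)) R N := Module.finBasis R _
  let c : Module.Basis (Fin (Module.finrank R ((Fin n → R) ⧸ N))) R ((Fin n → R) ⧸ N) :=
    Module.finBasis R _
  let d := (b.sumQuot c).reindex (Equiv.sumComm _ _)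
  refine ⟨_, _, ?_, rfl, Matrix.of fun i j => d (Sum.inl j) i,
    Matrix.of fun i j => d (Sum.inr j) i, d.toMatrix (Pi.basisFun R (Fin n)), ?_, ?_, ?_⟩
  · have := Submodule.finrank_quotient_add_finrank N
    simpa using this
  · rw [← (Pi.basisFun R (Fin n)).toMatrix_mul_toMatrix_flip d]
    congr 1
    ext i (j | j) <;> simp [Module.Basis.toMatrix_apply]
  · rw [← d.toMatrix_mul_toMatrix_flip (Pi.basisFun R (Fin n))]
    congr 1
    ext i (j | j) <;> simp [Module.Basis.toMatrix_apply]
  · ext i j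
    have h0 : d (Sum.inr j) = (b j : Fin n → R) := by
      simp [d]
    have h1 : A.mulVecLin (d (Sum.inr j)) = 0 := by
      rw [h0]; exact (b j).2
    exact congrFun h1 i

/-- The complete solution set of a solvable matrix equation `B * X = A` over a
PID is the set of right multiples of a fixed solution `F` by factors
`Q * fromBlocks(I, 0, T₃, T₄) * Q⁻¹`. -/
theorem solution_set_description
    (R : Type*) [CommRing R] [IsDomain R] [IsPrincipalIdealRing R]
    (n : ℕ) (A B : Matrix (Fin n) (Fin n) R)
    (h : ∃ X : Matrix (Fin n) (Fin n) R, B * X = A) :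
    ∃ (t s : ℕ), t + s = n ∧
      ∃ (e : Fin n ≃ (Fin t ⊕ Fin s)) (Q : Matrix (Fin n) (Fin n) R)
        (F : Matrix (Fin n) (Fin n) R),
        IsUnit Q ∧ B * F = A ∧
        ∀ X : Matrix (Fin n) (Fin n) R,
          B * X = A ↔
            ∃ (T₃ : Matrix (Fin s) (Fin t) R) (T₄ : Matrix (Fin s) (Fin s) R),
              X = F * (Q *
                (Matrix.reindex e.symm e.symm (Matrix.fromBlocks 1 0 T₃ T₄)) *
                Q⁻¹) := by
  obtain ⟨X₀, hX₀⟩ := h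
  obtain ⟨t, s, hts, hs, Q₁, Q₂, P, hQP, hPQ, hAQ⟩ := aux_basis A
  have hle : Module.finrank R (LinearMap.ker B.mulVecLin) ≤ s := by
    have h1 := Submodule.finrank_quotient_add_finrank (LinearMap.ker A.mulVecLin)
    rw [A.mulVecLin.quotKerEquivRange.finrank_eq] at h1
    have h2 := Submodule.finrank_quotient_add_finrank (LinearMap.ker B.mulVecLin)
    rw [B.mulVecLin.quotKerEquivRange.finrank_eq] at h2
    have h3 : Module.finrank R (LinearMap.range A.mulVecLin) ≤
        Module.finrank R (LinearMap.range B.mulVecLin) := by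
      apply Submodule.finrank_mono
      rw [← hX₀, Matrix.mulVecLin_mul]
      exact LinearMap.range_comp_le_range _ _
    omega
  obtain ⟨K, hBK, hK⟩ := aux_gen B hle
  let e : Fin n ≃ Fin t ⊕ Fin s := (finCongr hts.symm).trans finSumFinEquiv.symm
  let Q : Matrix (Fin n) (Fin n) R := (Matrix.fromCols Q₁ Q₂).submatrix id e
  let P' : Matrix (Fin n) (Fin n) R := P.submatrix e id
  have hQP' : Q * P' = 1 := by
    simp only [Q, P', Matrix.submatrix_mul_equiv, hQP, Matrix.submatrix_id_id]
  have hPQ' : P' * Q = 1 := mul_eq_one_comm.mp hQP'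
  have hinv : Q⁻¹ = P' := Matrix.inv_eq_right_inv hQP'
  let G : Matrix (Fin n) (Fin t ⊕ Fin s) R := Matrix.fromCols (X₀ * Q₁) K
  have key : ∀ M : Matrix (Fin t ⊕ Fin s) (Fin t ⊕ Fin s) R,
      G.submatrix id e * P' * (Q * (Matrix.reindex e.symm e.symm M) * Q⁻¹) = (G * M) * P := by
    intro M
    rw [hinv]
    calc _ = G.submatrix id e * (P' * Q) * (Matrix.reindex e.symm e.symm M) * P' := by
          simp only [Matrix.mul_assoc]
      _ = _ := by
          rw [hPQ', Matrix.mul_one]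
          simp [P', Matrix.submatrix_mul_equiv]
  refine ⟨t, s, hts, e, Q, G.submatrix id e * P',
    ⟨⟨Q, P', hQP', hPQ'⟩, rfl⟩, ?_, ?_⟩
  · simp only [P', Matrix.submatrix_mul_equiv, Matrix.submatrix_id_id, G]
    rw [← Matrix.mul_assoc, Matrix.mul_fromCols, hBK, ← Matrix.mul_assoc, hX₀, ← hAQ,
      ← Matrix.mul_fromCols, Matrix.mul_assoc, hQP, Matrix.mul_one]
  · intro X
    simp only [key, G, Matrix.fromCols_mul_fromBlocks, Matrix.mul_one, Matrix.mul_zero, zero_add]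
    constructor
    · intro hX
      obtain ⟨T₃, h3⟩ := hK t (X * Q₁ - X₀ * Q₁) (by
        rw [Matrix.mul_sub, ← Matrix.mul_assoc, ← Matrix.mul_assoc, hX, hX₀, sub_self])
      obtain ⟨T₄, h4⟩ := hK s (X * Q₂) (by rw [← Matrix.mul_assoc, hX, hAQ])
      refine ⟨T₃, T₄, ?_⟩
      rw [← h3, ← h4, add_sub_cancel, ← Matrix.mul_fromCols, Matrix.mul_assoc, hQP, Matrix.mul_one]
    · rintro ⟨T₃, T₄, rfl⟩
      rw [← Matrix.mul_assoc, Matrix.mul_fromCols, Matrix.mul_add, ← Matrix.mul_assoc,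
        ← Matrix.mul_assoc, ← Matrix.mul_assoc, hBK, Matrix.zero_mul, Matrix.zero_mul, add_zero,
        hX₀, ← hAQ, ← Matrix.mul_fromCols, Matrix.mul_assoc, hQP, Matrix.mul_one]
end

section
/- Let R be an integral domain, let t, s be natural numbers, and let ι = Fin t ⊕ Fin s be the index type for square matrices of size t + s over R. Let D be a t×t diagonal matrix over R all of whose diagonal entries are nonzero, and set Φ = fromBlocks(D, 0, 0, 0). Let U, V, Q be invertible ι×ι matrices over R and set B = V⁻¹ · Φ · U⁻¹. Let S be an ι×ι matrix over R whose top-right t×s block is zero, i.e. S = fromBlocks(S₁₁, 0, S₂₁, S₂₂), and set A = B · (U · S · Q⁻¹) and F = U · fromBlocks(S₁₁, 0, 0, I_s) · Q⁻¹. Then: (i) B·F = A; and (ii) for every ι×ι matrix X over R, B·X = A if and only if there exist an s×t matrix T₃ and an s×s matrix T₄ over R with X = F · (Q · fromBlocks(I_t, 0, T₃, T₄) · Q⁻¹). In particular F is a solution of B·X = A that left-divides every solution, i.e. F is a left greatest common divisor of the solution set. -/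
/-- For `B = V⁻¹ * Φ * U⁻¹` with `Φ = fromBlocks(D, 0, 0, 0)`, `D` diagonal
with nonzero diagonal entries, and `A = B * (U * S * Q⁻¹)` where the top-right
block of `S` vanishes, the matrix `F = U * fromBlocks(S₁₁, 0, 0, I) * Q⁻¹` is
a solution of `B * X = A` that left-divides every solution. -/
theorem gcd_explicit_form
    (R : Type*) [CommRing R] [IsDomain R] (t s : ℕ)
    (d : Fin t → R) (hd : ∀ i, d i ≠ 0)
    (U V Q : Matrix (Fin t ⊕ Fin s) (Fin t ⊕ Fin s) R)
    (hU : IsUnit U) (hV : IsUnit V) (hQ : IsUnit Q)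
    (S₁₁ : Matrix (Fin t) (Fin t) R) (S₂₁ : Matrix (Fin s) (Fin t) R)
    (S₂₂ : Matrix (Fin s) (Fin s) R) :
    letI Φ : Matrix (Fin t ⊕ Fin s) (Fin t ⊕ Fin s) R :=
      Matrix.fromBlocks (Matrix.diagonal d) 0 0 0
    letI B := V⁻¹ * Φ * U⁻¹
    letI S : Matrix (Fin t ⊕ Fin s) (Fin t ⊕ Fin s) R :=
      Matrix.fromBlocks S₁₁ 0 S₂₁ S₂₂
    letI A := B * (U * S * Q⁻¹)
    letI F := U * Matrix.fromBlocks S₁₁ 0 0 1 * Q⁻¹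
    B * F = A ∧
      ∀ X : Matrix (Fin t ⊕ Fin s) (Fin t ⊕ Fin s) R,
        B * X = A ↔
          ∃ (T₃ : Matrix (Fin s) (Fin t) R) (T₄ : Matrix (Fin s) (Fin s) R),
            X = F * (Q * Matrix.fromBlocks 1 0 T₃ T₄ * Q⁻¹) := by
  have hU1 : U⁻¹ * U = 1 := Matrix.nonsing_inv_mul U ((Matrix.isUnit_iff_isUnit_det U).1 hU)
  have hU2 : U * U⁻¹ = 1 := Matrix.mul_nonsing_inv U ((Matrix.isUnit_iff_isUnit_det U).1 hU)
  have hV2 : V * V⁻¹ = 1 := Matrix.mul_nonsing_inv V ((Matrix.isUnit_iff_isUnit_det V).1 hV)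
  have hQ1 : Q⁻¹ * Q = 1 := Matrix.nonsing_inv_mul Q ((Matrix.isUnit_iff_isUnit_det Q).1 hQ)
  have hQ2 : Q * Q⁻¹ = 1 := Matrix.mul_nonsing_inv Q ((Matrix.isUnit_iff_isUnit_det Q).1 hQ)
  have key : ∀ P Y : Matrix (Fin t ⊕ Fin s) (Fin t ⊕ Fin s) R,
      V⁻¹ * P * U⁻¹ * (U * Y * Q⁻¹) = V⁻¹ * (P * Y) * Q⁻¹ := by
    intro P Y
    calc V⁻¹ * P * U⁻¹ * (U * Y * Q⁻¹) = V⁻¹ * P * (U⁻¹ * U) * Y * Q⁻¹ := by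
          simp only [Matrix.mul_assoc]
      _ = _ := by rw [hU1, Matrix.mul_one]; simp only [Matrix.mul_assoc]
  have key2 : ∀ G T : Matrix (Fin t ⊕ Fin s) (Fin t ⊕ Fin s) R,
      U * G * Q⁻¹ * (Q * T * Q⁻¹) = U * (G * T) * Q⁻¹ := by
    intro G T
    calc U * G * Q⁻¹ * (Q * T * Q⁻¹) = U * G * (Q⁻¹ * Q) * T * Q⁻¹ := by
          simp only [Matrix.mul_assoc]
      _ = _ := by rw [hQ1, Matrix.mul_one]; simp only [Matrix.mul_assoc]
  have canc : ∀ M N : Matrix (Fin t ⊕ Fin s) (Fin t ⊕ Fin s) R,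
      V⁻¹ * M * Q⁻¹ = V⁻¹ * N * Q⁻¹ → M = N := by
    intro M N h
    have e : ∀ M, V * (V⁻¹ * M * Q⁻¹) * Q = M := by
      intro M
      calc V * (V⁻¹ * M * Q⁻¹) * Q = (V * V⁻¹) * M * (Q⁻¹ * Q) := by
            simp only [Matrix.mul_assoc]
        _ = M := by rw [hV2, hQ1, Matrix.one_mul, Matrix.mul_one]
    rw [← e M, h, e N]
  have dcanc : ∀ {n : ℕ} (M N : Matrix (Fin t) (Fin n) R),
      Matrix.diagonal d * M = Matrix.diagonal d * N → M = N := by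
    intro n M N h
    ext i j
    have := congrFun (congrFun h i) j
    rw [Matrix.diagonal_mul, Matrix.diagonal_mul] at this
    exact mul_left_cancel₀ (hd i) this
  refine ⟨?_, fun X => ⟨fun h => ?_, ?_⟩⟩
  · rw [key, key]
    simp [Matrix.fromBlocks_multiply]
  · obtain ⟨Y, rfl⟩ : ∃ Y, X = U * Y * Q⁻¹ := by
      refine ⟨U⁻¹ * X * Q, ?_⟩
      calc X = (U * U⁻¹) * X * (Q * Q⁻¹) := by
            rw [hU2, hQ2, Matrix.one_mul, Matrix.mul_one]
        _ = _ := by simp only [Matrix.mul_assoc]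
    rw [key, key] at h
    have h := canc _ _ h
    rw [← Matrix.fromBlocks_toBlocks Y, Matrix.fromBlocks_multiply,
      Matrix.fromBlocks_multiply, Matrix.fromBlocks_inj] at h
    obtain ⟨h1, h2, -, -⟩ := h
    simp only [Matrix.zero_mul, add_zero] at h1 h2
    have e1 := dcanc _ _ h1
    have e2 := dcanc _ _ h2
    refine ⟨Y.toBlocks₂₁, Y.toBlocks₂₂, ?_⟩
    rw [key2, Matrix.fromBlocks_multiply]
    simp only [Matrix.zero_mul, Matrix.mul_zero, Matrix.mul_one, Matrix.one_mul, add_zero,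
      zero_add]
    rw [← e1, ← e2, Matrix.fromBlocks_toBlocks]
  · rintro ⟨T₃, T₄, rfl⟩
    rw [key2, key, key]
    simp [Matrix.fromBlocks_multiply]
end

section
/- Let R be an integral domain, let t, s be natural numbers, and let ι = Fin t ⊕ Fin s be the index type for square matrices of size t + s over R. Let D be a t×t diagonal matrix over R all of whose diagonal entries are nonzero, and set Φ = fromBlocks(D, 0, 0, 0). Let U, V, Q be invertible ι×ι matrices over R and set B = V⁻¹ · Φ · U⁻¹. Let S be an ι×ι matrix over R whose top-right t×s block is zero, i.e. S = fromBlocks(S₁₁, 0, S₂₁, S₂₂), and set A = B · (U · S · Q⁻¹) and N = U · fromBlocks(S₁₁, 0, 0, 0) · Q⁻¹. Then B·N = A, and for every ι×ι matrix X over R with B·X = A one has N = (U · fromBlocks(I_t, 0, 0, 0) · U⁻¹) · X. In particular N is a solution of B·X = A that is a left multiple of every solution, i.e. N is a left least common multiple of the solution set. -/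
theorem lcm_aux_cancel {R : Type*} [CommRing R] [IsDomain R] {t s : ℕ}
    (d : Fin t → R) (hd : ∀ i, d i ≠ 0)
    (Y Z : Matrix (Fin t ⊕ Fin s) (Fin t ⊕ Fin s) R)
    (h : (Matrix.fromBlocks (Matrix.diagonal d) 0 0 0 :
      Matrix (Fin t ⊕ Fin s) (Fin t ⊕ Fin s) R) * Y =
      Matrix.fromBlocks (Matrix.diagonal d) 0 0 0 * Z) :
    (Matrix.fromBlocks 1 0 0 0 : Matrix (Fin t ⊕ Fin s) (Fin t ⊕ Fin s) R) * Y =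
      Matrix.fromBlocks 1 0 0 0 * Z := by
  rw [← Matrix.fromBlocks_toBlocks Y, ← Matrix.fromBlocks_toBlocks Z] at h ⊢
  simp only [Matrix.fromBlocks_multiply, Matrix.zero_mul, add_zero, Matrix.one_mul,
    Matrix.fromBlocks_inj, and_true] at h ⊢
  obtain ⟨h1, h2⟩ := h
  constructor
  · ext i j
    have := congrFun (congrFun h1 i) j
    simp only [Matrix.diagonal_mul] at this
    exact mul_left_cancel₀ (hd i) this
  · ext i j
    have := congrFun (congrFun h2 i) j
    simp only [Matrix.diagonal_mul] at this
    exact mul_left_cancel₀ (hd i) this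

/-- For `B = V⁻¹ * Φ * U⁻¹` with `Φ = fromBlocks(D, 0, 0, 0)`, `D` diagonal
with nonzero diagonal entries, and `A = B * (U * S * Q⁻¹)` where the top-right
block of `S` vanishes, the matrix `N = U * fromBlocks(S₁₁, 0, 0, 0) * Q⁻¹` is
a solution of `B * X = A` that is a left multiple of every solution. -/
theorem lcm_explicit_form
    (R : Type*) [CommRing R] [IsDomain R] (t s : ℕ)
    (d : Fin t → R) (hd : ∀ i, d i ≠ 0)
    (U V Q : Matrix (Fin t ⊕ Fin s) (Fin t ⊕ Fin s) R)
    (hU : IsUnit U) (hV : IsUnit V) (hQ : IsUnit Q)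
    (S₁₁ : Matrix (Fin t) (Fin t) R) (S₂₁ : Matrix (Fin s) (Fin t) R)
    (S₂₂ : Matrix (Fin s) (Fin s) R) :
    letI Φ : Matrix (Fin t ⊕ Fin s) (Fin t ⊕ Fin s) R :=
      Matrix.fromBlocks (Matrix.diagonal d) 0 0 0
    letI B := V⁻¹ * Φ * U⁻¹
    letI S : Matrix (Fin t ⊕ Fin s) (Fin t ⊕ Fin s) R :=
      Matrix.fromBlocks S₁₁ 0 S₂₁ S₂₂
    letI A := B * (U * S * Q⁻¹)
    letI N := U * Matrix.fromBlocks S₁₁ 0 0 0 * Q⁻¹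
    B * N = A ∧
      ∀ X : Matrix (Fin t ⊕ Fin s) (Fin t ⊕ Fin s) R,
        B * X = A →
          N = (U * Matrix.fromBlocks 1 0 0 0 * U⁻¹) * X := by
  have hU' : U⁻¹ * U = 1 := Matrix.nonsing_inv_mul U ((Matrix.isUnit_iff_isUnit_det U).1 hU)
  have hV' : V * V⁻¹ = 1 := Matrix.mul_nonsing_inv V ((Matrix.isUnit_iff_isUnit_det V).1 hV)
  have cU : ∀ M : Matrix (Fin t ⊕ Fin s) (Fin t ⊕ Fin s) R, U⁻¹ * (U * M) = M := fun M => by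
    rw [← Matrix.mul_assoc, hU', Matrix.one_mul]
  have cV : ∀ M : Matrix (Fin t ⊕ Fin s) (Fin t ⊕ Fin s) R, V * (V⁻¹ * M) = M := fun M => by
    rw [← Matrix.mul_assoc, hV', Matrix.one_mul]
  have e1 : (Matrix.fromBlocks (Matrix.diagonal d) 0 0 0 :
      Matrix (Fin t ⊕ Fin s) (Fin t ⊕ Fin s) R) * Matrix.fromBlocks S₁₁ 0 0 0 =
      Matrix.fromBlocks (Matrix.diagonal d) 0 0 0 * Matrix.fromBlocks S₁₁ 0 S₂₁ S₂₂ := by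
    simp [Matrix.fromBlocks_multiply]
  have e2 : (Matrix.fromBlocks 1 0 0 0 :
      Matrix (Fin t ⊕ Fin s) (Fin t ⊕ Fin s) R) * Matrix.fromBlocks S₁₁ 0 S₂₁ S₂₂ =
      Matrix.fromBlocks S₁₁ 0 0 0 := by
    simp [Matrix.fromBlocks_multiply]
  refine ⟨?_, fun X hX => ?_⟩
  · simp only [Matrix.mul_assoc, cU]
    rw [← Matrix.mul_assoc _ _ Q⁻¹, e1, Matrix.mul_assoc]
  · simp only [Matrix.mul_assoc, cU] at hX ⊢
    have h := congrArg (fun M => V * M) hX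
    simp only [cV] at h
    rw [lcm_aux_cancel d hd _ _ h, ← e2]
    simp only [Matrix.mul_assoc]
end

section
/- Let R be an integral domain, let t, s be natural numbers, and let ι = Fin t ⊕ Fin s be the index type for square matrices of size t + s over R. Let D be a t×t diagonal matrix over R all of whose diagonal entries are nonzero, and set Φ = fromBlocks(D, 0, 0, 0). Let U, V be invertible ι×ι matrices over R and set B = V⁻¹ · Φ · U⁻¹. Then for every ι×ι matrix X over R the following are equivalent: B·X = 0 if and only if there exist an s×t matrix Y₁ and an s×s matrix Y₂ over R with X = U · fromBlocks(0, 0, Y₁, Y₂). (This describes the right annihilator of B as the set of matrices U·[0; Y] with arbitrary bottom block Y.) -/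
/-- The right annihilator of `B = V⁻¹ * fromBlocks(D, 0, 0, 0) * U⁻¹`, with
`D` diagonal with nonzero diagonal entries and `U, V` invertible, consists of
the matrices `U * fromBlocks(0, 0, Y₁, Y₂)` with arbitrary bottom blocks. -/
theorem right_annihilator_description
    (R : Type*) [CommRing R] [IsDomain R] (t s : ℕ)
    (d : Fin t → R) (hd : ∀ i, d i ≠ 0)
    (U V : Matrix (Fin t ⊕ Fin s) (Fin t ⊕ Fin s) R)
    (hU : IsUnit U) (hV : IsUnit V) :
    letI Φ : Matrix (Fin t ⊕ Fin s) (Fin t ⊕ Fin s) R :=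
      Matrix.fromBlocks (Matrix.diagonal d) 0 0 0
    letI B := V⁻¹ * Φ * U⁻¹
    ∀ X : Matrix (Fin t ⊕ Fin s) (Fin t ⊕ Fin s) R,
      B * X = 0 ↔
        ∃ (Y₁ : Matrix (Fin s) (Fin t) R) (Y₂ : Matrix (Fin s) (Fin s) R),
          X = U * Matrix.fromBlocks 0 0 Y₁ Y₂ := by
  intro X
  have hU' : IsUnit U.det := (Matrix.isUnit_iff_isUnit_det U).1 hU
  have hV' : IsUnit V.det := (Matrix.isUnit_iff_isUnit_det V).1 hV
  constructor
  · intro h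
    have h1 : Matrix.fromBlocks (Matrix.diagonal d) 0 0 (0 : Matrix (Fin s) (Fin s) R)
        * (U⁻¹ * X) = 0 := by
      have h2 := congrArg (fun M => V * M) h
      simpa only [Matrix.mul_assoc, Matrix.mul_nonsing_inv_cancel_left _ _ hV',
        Matrix.mul_zero] using h2
    have hX : X = U * (U⁻¹ * X) := (Matrix.mul_nonsing_inv_cancel_left _ _ hU').symm
    generalize U⁻¹ * X = Z at h1 hX
    refine ⟨Z.toBlocks₂₁, Z.toBlocks₂₂, ?_⟩
    rw [hX]
    congr 1
    have key : ∀ i j, Z (Sum.inl i) j = 0 := by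
      intro i j
      have h3 := congrFun (congrFun h1 (Sum.inl i)) j
      simp [Matrix.mul_apply, Matrix.diagonal_apply] at h3
      exact h3.resolve_left (hd i)
    ext i j
    rcases i with i | i <;> rcases j with j | j <;>
      simp [key, Matrix.toBlocks₂₁, Matrix.toBlocks₂₂]
  · rintro ⟨Y₁, Y₂, rfl⟩
    rw [Matrix.mul_assoc, Matrix.nonsing_inv_mul_cancel_left _ _ hU', Matrix.mul_assoc,
      Matrix.fromBlocks_multiply]
    simp
end

section
/- Let R be an integral domain, let t, s be natural numbers, and let ι = Fin t ⊕ Fin s be the index type for square matrices of size t + s over R. Let D be a t×t diagonal matrix over R all of whose diagonal entries are nonzero, and set Φ = fromBlocks(D, 0, 0, 0). Let U, V be invertible ι×ι matrices over R and set B = V⁻¹ · Φ · U⁻¹. Then for every ι×ι matrix A over R and any two matrices X₁, X₂ with B·X₁ = A and B·X₂ = A, one has (U · fromBlocks(I_t, 0, 0, 0) · U⁻¹) · X₁ = (U · fromBlocks(I_t, 0, 0, 0) · U⁻¹) · X₂. (All solutions of B·X = A have the same image under the projection U·diag(I_t,0)·U⁻¹, which is why the left least common multiple of the solutions is well defined by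 this common value.) -/
/-- All solutions of `B * X = A`, where `B = V⁻¹ * fromBlocks(D, 0, 0, 0) * U⁻¹`
with `D` diagonal with nonzero diagonal entries and `U, V` invertible, have the
same image under left multiplication by the projection
`U * fromBlocks(I, 0, 0, 0) * U⁻¹`. -/
theorem projection_of_solutions_well_defined
    (R : Type*) [CommRing R] [IsDomain R] (t s : ℕ)
    (d : Fin t → R) (hd : ∀ i, d i ≠ 0)
    (U V : Matrix (Fin t ⊕ Fin s) (Fin t ⊕ Fin s) R)
    (hU : IsUnit U) (hV : IsUnit V) :
    letI Φ : Matrix (Fin t ⊕ Fin s) (Fin t ⊕ Fin s) R :=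
      Matrix.fromBlocks (Matrix.diagonal d) 0 0 0
    letI B := V⁻¹ * Φ * U⁻¹
    ∀ (A X₁ X₂ : Matrix (Fin t ⊕ Fin s) (Fin t ⊕ Fin s) R),
      B * X₁ = A → B * X₂ = A →
        (U * Matrix.fromBlocks 1 0 0 0 * U⁻¹) * X₁ =
          (U * Matrix.fromBlocks 1 0 0 0 * U⁻¹) * X₂ := by
  intro A X₁ X₂ h₁ h₂
  have hVd : IsUnit V.det := (Matrix.isUnit_iff_isUnit_det V).1 hV
  have h : V⁻¹ * (Matrix.fromBlocks (Matrix.diagonal d) 0 0 0 * (U⁻¹ * X₁)) =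
      V⁻¹ * (Matrix.fromBlocks (Matrix.diagonal d) 0 0 0 * (U⁻¹ * X₂)) := by
    simpa only [Matrix.mul_assoc] using h₁.trans h₂.symm
  have h' := congrArg (fun M => V * M) h
  simp only [Matrix.mul_nonsing_inv_cancel_left _ _ hVd] at h'
  have e1 : (Matrix.fromBlocks (Matrix.diagonal d) 0 0 0 :
      Matrix (Fin t ⊕ Fin s) (Fin t ⊕ Fin s) R) = Matrix.diagonal (Sum.elim d 0) := by
    rw [← Matrix.fromBlocks_diagonal]
    simp
  have e2 : (Matrix.fromBlocks 1 0 0 0 :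
      Matrix (Fin t ⊕ Fin s) (Fin t ⊕ Fin s) R) = Matrix.diagonal (Sum.elim 1 0) := by
    rw [← Matrix.fromBlocks_diagonal]
    simp
  rw [e1] at h'
  rw [e2]
  simp only [Matrix.mul_assoc]
  congr 1
  ext i j
  have hij := congrFun (congrFun h' i) j
  rw [Matrix.diagonal_mul, Matrix.diagonal_mul] at hij ⊢
  rcases i with i | i
  · simpa using mul_left_cancel₀ (hd i) (by simpa only [Sum.elim_inl] using hij)
  · simp
end

section
/- Over the integers ℤ, let A = diag(1, 2, 6, 0, 0, 0, 0) be the 7×7 diagonal matrix, let B be the 7×7 integer matrix with rows (0,1,0,0,0,0,0), (0,−2,2,0,0,0,0), (1,0,0,0,0,0,0), (0,0,0,0,0,0,0), (−2,0,−12,0,12,0,0), (0,0,0,0,0,0,0), (−2,0,−4,4,0,0,0), and let F be the 7×7 integer matrix with rows (0,0,6,0,0,0,0), (1,0,0,0,0,0,0), (1,1,0,0,0,0,0), (1,1,3,0,0,0,0), (1,1,1,0,0,0,0), (0,0,0,0,0,1,0), (0,0,0,0,0,0,1). Then B·F = A, and for every 7×7 integer matrix X with B·X = A there exists a 7×7 integer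 matrix M with X = F·M. (F is a left greatest common divisor of the solutions of B·X = A over ℤ and is itself a solution.) -/
/-- Concrete example over `ℤ`: `F` is a left greatest common divisor of the
solutions of `B * X = A` and is itself a solution. -/
theorem example_gcd_of_solutions :
    letI A : Matrix (Fin 7) (Fin 7) ℤ :=
      Matrix.diagonal ![1, 2, 6, 0, 0, 0, 0]
    letI B : Matrix (Fin 7) (Fin 7) ℤ :=
      !![0, 1, 0, 0, 0, 0, 0;
         0, -2, 2, 0, 0, 0, 0;
         1, 0, 0, 0, 0, 0, 0;
         0, 0, 0, 0, 0, 0, 0;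
         -2, 0, -12, 0, 12, 0, 0;
         0, 0, 0, 0, 0, 0, 0;
         -2, 0, -4, 4, 0, 0, 0]
    letI F : Matrix (Fin 7) (Fin 7) ℤ :=
      !![0, 0, 6, 0, 0, 0, 0;
         1, 0, 0, 0, 0, 0, 0;
         1, 1, 0, 0, 0, 0, 0;
         1, 1, 3, 0, 0, 0, 0;
         1, 1, 1, 0, 0, 0, 0;
         0, 0, 0, 0, 0, 1, 0;
         0, 0, 0, 0, 0, 0, 1]
    B * F = A ∧
      ∀ X : Matrix (Fin 7) (Fin 7) ℤ, B * X = A →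
        ∃ M : Matrix (Fin 7) (Fin 7) ℤ, X = F * M := by
  refine ⟨by decide, fun X hX => ?_⟩
  refine ⟨Matrix.of ![X 1, X 2 - X 1, X 4 - X 2, 0, 0, X 5, X 6], ?_⟩
  have h4 : ∀ j, -2 * X 0 j - 12 * X 2 j + 12 * X 4 j = 0 := by
    intro j
    have h := congrFun (congrFun hX 4) j
    have hz : (Matrix.diagonal ![1, 2, 6, 0, 0, 0, 0] : Matrix (Fin 7) (Fin 7) ℤ) 4 j = 0 := by
      clear h; revert j; decide
    rw [hz] at h
    simp [Matrix.mul_apply, Fin.sum_univ_succ] at h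
    change -(2 * X 0 j) + (-(12 * X 2 j) + 12 * X 4 j) = 0 at h
    linarith
  have h6 : ∀ j, -2 * X 0 j - 4 * X 2 j + 4 * X 3 j = 0 := by
    intro j
    have h := congrFun (congrFun hX 6) j
    have hz : (Matrix.diagonal ![1, 2, 6, 0, 0, 0, 0] : Matrix (Fin 7) (Fin 7) ℤ) 6 j = 0 := by
      clear h; revert j; decide
    rw [hz] at h
    simp [Matrix.mul_apply, Fin.sum_univ_succ] at h
    change -(2 * X 0 j) + (-(4 * X 2 j) + 4 * X 3 j) = 0 at h
    linarith
  ext i j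
  have a := h4 j
  have b := h6 j
  fin_cases i <;> simp [Matrix.mul_apply, Fin.sum_univ_succ] <;> omega
end
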